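/- Let p = 3 and q = p^m where m ≥ 6 is an even integer. Then the number of 6-tuples (x,y,z,w,u,v) ∈ F_q⁶ satisfying x²+y²+z²+w²+u²+v² = 0, x⁴+y⁴+z⁴+w⁴+u⁴+v⁴ = 0, and x^{10}+y^{10}+z^{10}+w^{10}+u^{10}+v^{10} = 0 equals n_{1,0} + n_{−1,0} + p⁶(n_{1,2}+n_{−1,2}) + p^{12}(n_{1,4}+n_{−1,4}) − p³(n_{1,1}+n_{−1,1}) − p⁹(n_{1,3}+n_{−1,3}) + p^{3m}. -/

import Mathlib

open Complex Finset

noncomputable def zetaPow (p : ℕ) (a : ZMod p) : ℂ :=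
  Complex.exp (2 * Real.pi * Complex.I * (a.val : ℂ) / (p : ℂ))

noncomputable def expSum (p m : ℕ) [Fact p.Prime]
    (α β γ : GaloisField p m) : ℂ :=
  letI : Fintype (GaloisField p m) := Fintype.ofFinite _
  ∑ x : GaloisField p m,
    zetaPow p ((Algebra.trace (ZMod p) (GaloisField p m))
      (α * x ^ 2 + β * x ^ (p + 1) + γ * x ^ (p ^ 2 + 1)))

noncomputable def nval (p m : ℕ) (ε : ℤ) (j : ℕ) : ℂ :=
  if j % 2 = 0 then (ε : ℂ) * ((Real.sqrt ((p : ℝ) ^ (m + j)) : ℝ) : ℂ)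
  else (ε : ℂ) * Complex.I * ((Real.sqrt ((p : ℝ) ^ (m + j)) : ℝ) : ℂ)

noncomputable def nn (p m : ℕ) [Fact p.Prime] (ε : ℤ) (j : ℕ) : ℕ :=
  {t : GaloisField p m × GaloisField p m × GaloisField p m |
    t ≠ (0, 0, 0) ∧ expSum p m t.1 t.2.1 t.2.2 = nval p m ε j}.ncard

section CharacterSums

lemma AddChar.map_finset_sum_eq_prod {A M ι : Type*} [AddCommMonoid A] [CommMonoid M]
    (ψ : AddChar A M) (s : Finset ι) (f : ι → A) : ψ (∑ i ∈ s, f i) = ∏ i ∈ s, ψ (f i) :=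
  map_prod ψ.toMonoidHom (fun i => Multiplicative.ofAdd (f i)) s

/-- The canonical additive character `a ↦ ζ_p ^ Tr a` of an algebra over `ZMod p`. -/
noncomputable def traceChar (p : ℕ) [NeZero p] (F : Type*) [CommRing F] [Algebra (ZMod p) F] :
    AddChar F ℂ :=
  (ZMod.stdAddChar (N := p)).compAddMonoidHom (Algebra.trace (ZMod p) F).toAddMonoidHom

lemma zetaPow_eq_stdAddChar (p : ℕ) [NeZero p] (a : ZMod p) :
    zetaPow p a = ZMod.stdAddChar a := by
  rw [ZMod.stdAddChar_apply, ZMod.toCircle_apply, zetaPow]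

lemma isPrimitive_traceChar (p : ℕ) [Fact p.Prime] (F : Type*) [Field F] [Finite F]
    [Algebra (ZMod p) F] : (traceChar p F).IsPrimitive := by
  apply AddChar.IsPrimitive.of_ne_one
  intro h
  apply Algebra.trace_ne_zero (ZMod p) F
  ext x
  apply ZMod.injective_stdAddChar
  simpa [traceChar] using DFunLike.congr_fun h x

/-- Orthogonality of characters detects the common zeros of three functions. -/
lemma sum_sum_addChar_eq_card {F X : Type*} [Field F] [Fintype F] [Fintype X] [DecidableEq F]
    {ψ : AddChar F ℂ} (hψ : ψ.IsPrimitive) (f g h : X → F) :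
    ∑ t : F × F × F, ∑ x, ψ (t.1 * f x + t.2.1 * g x + t.2.2 * h x) =
      (Fintype.card F : ℂ) ^ 3 * #{x | f x = 0 ∧ g x = 0 ∧ h x = 0} := by
  rw [Finset.sum_comm, Finset.card_filter, Nat.cast_sum, Finset.mul_sum]
  refine Finset.sum_congr rfl fun x _ => ?_
  simp_rw [AddChar.map_add_eq_mul, Fintype.sum_prod_type, ← Finset.mul_sum, mul_assoc,
    ← Finset.mul_sum, ← Finset.sum_mul, AddChar.sum_mulShift _ hψ]
  split_ifs <;> simp_all
  ring

/-- The sixth moment of a three-parameter family of exponential sums counts solutions. -/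
lemma sum_pow_six_eq_card {F : Type*} [Field F] [Fintype F] [DecidableEq F]
    {ψ : AddChar F ℂ} (hψ : ψ.IsPrimitive) (f g h : F → F) :
    ∑ t : F × F × F, (∑ x, ψ (t.1 * f x + t.2.1 * g x + t.2.2 * h x)) ^ 6 =
      (Fintype.card F : ℂ) ^ 3 *
        #{x : Fin 6 → F | ∑ i, f (x i) = 0 ∧ ∑ i, g (x i) = 0 ∧ ∑ i, h (x i) = 0} := by
  rw [← sum_sum_addChar_eq_card hψ]
  refine Finset.sum_congr rfl fun t _ => ?_
  rw [Fintype.sum_pow]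
  refine Finset.sum_congr rfl fun x _ => ?_
  rw [← AddChar.map_finset_sum_eq_prod]
  simp only [Finset.sum_add_distrib, Finset.mul_sum]

end CharacterSums

section DiagonalForms

lemma stdAddChar_three_one :
    ZMod.stdAddChar (1 : ZMod 3) = -1 / 2 + Complex.I * ((√3 : ℝ) : ℂ) / 2 := by
  have h := ZMod.stdAddChar_coe (N := 3) 1
  rw [Int.cast_one] at h
  rw [h]
  have : (2 * Real.pi * Complex.I * ((1 : ℤ) : ℂ) / ((3 : ℕ) : ℂ)) =
      ((Real.pi - Real.pi / 3 : ℝ) : ℂ) * Complex.I := by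
    push_cast; ring
  rw [this, Complex.exp_mul_I, ← Complex.ofReal_cos, ← Complex.ofReal_sin, Real.cos_pi_sub,
    Real.sin_pi_sub, Real.cos_pi_div_three, Real.sin_pi_div_three]
  push_cast; ring

/-- One-variable quadratic Gauss sums over the field with three elements. -/
lemma sum_stdAddChar_mul_sq (w : ZMod 3) :
    ∑ a : ZMod 3, ZMod.stdAddChar (w * a ^ 2) =
      if w = 0 then 3 else (if w = 1 then 1 else -1) * (Complex.I * ((√3 : ℝ) : ℂ)) := by
  have h2 : ZMod.stdAddChar (2 : ZMod 3) = ZMod.stdAddChar (1 : ZMod 3) ^ 2 := by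
    rw [← AddChar.map_nsmul_eq_pow]; rfl
  have h3 : ((√3 : ℝ) : ℂ) ^ 2 = 3 := by
    rw [← Complex.ofReal_pow, Real.sq_sqrt (by norm_num)]; norm_num
  have hsum : ∀ f : ZMod 3 → ℂ, ∑ a, f a = f 0 + f 1 + f 2 := fun f => Fin.sum_univ_three f
  rw [hsum]
  have e1 : (2 : ZMod 3) ^ 2 = 1 := rfl
  fin_cases w
  · change ZMod.stdAddChar ((0 : ZMod 3) * 0 ^ 2) + ZMod.stdAddChar ((0 : ZMod 3) * 1 ^ 2) +
      ZMod.stdAddChar ((0 : ZMod 3) * 2 ^ 2) = if (0 : ZMod 3) = 0 then 3 else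
        (if (0 : ZMod 3) = 1 then 1 else -1) * (Complex.I * ((√3 : ℝ) : ℂ))
    simp only [zero_mul, AddChar.map_zero_eq_one, if_true]
    norm_num
  · change ZMod.stdAddChar ((1 : ZMod 3) * 0 ^ 2) + ZMod.stdAddChar ((1 : ZMod 3) * 1 ^ 2) +
      ZMod.stdAddChar ((1 : ZMod 3) * 2 ^ 2) = if (1 : ZMod 3) = 0 then 3 else
        (if (1 : ZMod 3) = 1 then 1 else -1) * (Complex.I * ((√3 : ℝ) : ℂ))
    rw [if_neg (by decide), if_pos rfl, e1, zero_pow two_ne_zero, one_pow, mul_zero,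
      mul_one, AddChar.map_zero_eq_one, stdAddChar_three_one]
    ring
  · change ZMod.stdAddChar ((2 : ZMod 3) * 0 ^ 2) + ZMod.stdAddChar ((2 : ZMod 3) * 1 ^ 2) +
      ZMod.stdAddChar ((2 : ZMod 3) * 2 ^ 2) = if (2 : ZMod 3) = 0 then 3 else
        (if (2 : ZMod 3) = 1 then 1 else -1) * (Complex.I * ((√3 : ℝ) : ℂ))
    rw [if_neg (by decide), if_neg (by decide), e1, zero_pow two_ne_zero, one_pow, mul_zero,
      mul_one, AddChar.map_zero_eq_one, h2, stdAddChar_three_one]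
    linear_combination (Complex.I ^ 2 / 2) * h3 + (3 / 2) * Complex.I_sq

/-- Exponential sums of diagonal forms factor into Gauss sums. -/
lemma sum_stdAddChar_weighted {n : ℕ} (w : Fin n → ZMod 3) :
    ∃ s : ℂ, (s = 1 ∨ s = -1) ∧
      ∑ v : Fin n → ZMod 3, ZMod.stdAddChar (∑ i, w i * v i ^ 2) =
        s * 3 ^ #{i | w i = 0} * (Complex.I * ((√3 : ℝ) : ℂ)) ^ #{i | w i ≠ 0} := by
  refine ⟨∏ i with w i ≠ 0, if w i = 1 then 1 else -1, ?_, ?_⟩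
  · refine Finset.prod_induction _ (fun s : ℂ => s = 1 ∨ s = -1) ?_ (by simp) ?_
    · rintro a b (rfl | rfl) (rfl | rfl) <;> simp
    · intro i _; split_ifs <;> simp
  · simp_rw [AddChar.map_finset_sum_eq_prod]
    rw [← Fintype.prod_sum (f := fun i (a : ZMod 3) => ZMod.stdAddChar (w i * a ^ 2))]
    simp_rw [sum_stdAddChar_mul_sq]
    rw [Finset.prod_ite, Finset.prod_mul_distrib, Finset.prod_const, Finset.prod_const]
    ring

lemma nval_eq_of_even {m z k : ℕ} (hm : Even m) (hk : z + k = m) {s : ℂ}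
    (hs : s = 1 ∨ s = -1) :
    ∃ ε : ℤ, (ε = 1 ∨ ε = -1) ∧
      s * 3 ^ z * (Complex.I * ((√3 : ℝ) : ℂ)) ^ k = nval 3 m ε z := by
  have hs3 : √((3 : ℝ) ^ (m + z)) = 3 ^ z * √3 ^ k := by
    rw [Real.sqrt_eq_iff_mul_self_eq (by positivity) (by positivity), ← hk, eq_comm]
    calc (3 : ℝ) ^ z * √3 ^ k * (3 ^ z * √3 ^ k) = 3 ^ z * 3 ^ z * (√3 ^ 2) ^ k := by ring
      _ = _ := by rw [Real.sq_sqrt (by norm_num)]; ring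
  have hmain : ∃ ε : ℤ, (ε = 1 ∨ ε = -1) ∧
      s * Complex.I ^ k = ε * (if z % 2 = 0 then 1 else Complex.I) := by
    obtain ⟨δ, hδ, hsδ⟩ : ∃ δ : ℤ, (δ = 1 ∨ δ = -1) ∧ s = δ := by
      rcases hs with rfl | rfl
      · exact ⟨1, by simp⟩
      · exact ⟨-1, by simp⟩
    have hpow : ∀ n : ℕ, ((-1 : ℤ) ^ n = 1 ∨ (-1 : ℤ) ^ n = -1) := neg_one_pow_eq_or ℤ
    refine ⟨δ * (-1) ^ (k / 2), ?_, ?_⟩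
    · rcases hδ with rfl | rfl <;> rcases hpow (k / 2) with h | h <;> simp [h]
    · subst hsδ
      have hI : Complex.I ^ k = (-1) ^ (k / 2) * Complex.I ^ (k % 2) := by
        conv_lhs => rw [← Nat.div_add_mod k 2, pow_add, pow_mul, Complex.I_sq]
      rw [hI]
      obtain ⟨r, hr⟩ := hm
      split_ifs with hz
      · rw [show k % 2 = 0 by omega]; push_cast; ring
      · rw [show k % 2 = 1 by omega]; push_cast; ring
  obtain ⟨ε, hε, h⟩ := hmain
  refine ⟨ε, hε, ?_⟩
  unfold nval
  rw [Nat.cast_ofNat, hs3, mul_pow]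
  push_cast
  split_ifs at h ⊢ <;> linear_combination (3 ^ z * ((√3 : ℝ) : ℂ) ^ k) * h

end DiagonalForms

section TraceForms

variable (F : Type*) [Field F] [Algebra (ZMod 3) F]

/-- The `ZMod 3`-linear map `y ↦ α y + β y ^ 3 + γ y ^ 9`. -/
noncomputable def linearizedMap (α β γ : F) : F →ₗ[ZMod 3] F :=
  let φ := (FiniteField.frobeniusAlgHom (ZMod 3) F).toLinearMap
  LinearMap.mulLeft _ α + LinearMap.mulLeft _ β ∘ₗ φ + LinearMap.mulLeft _ γ ∘ₗ φ ∘ₗ φ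

lemma linearizedMap_apply (α β γ y : F) :
    linearizedMap F α β γ y = α * y + β * y ^ 3 + γ * y ^ 9 := by
  simp [linearizedMap, ← pow_mul]

/-- The bilinear form `Tr (x * (α y + β y ^ 3 + γ y ^ 9))`. -/
noncomputable def traceBilin (α β γ : F) : LinearMap.BilinForm (ZMod 3) F :=
  (Algebra.traceForm (ZMod 3) F).compl₂ (linearizedMap F α β γ)

lemma traceBilin_apply (α β γ x y : F) : traceBilin F α β γ x y =
    Algebra.trace (ZMod 3) F (x * (α * y + β * y ^ 3 + γ * y ^ 9)) := by
  simp [traceBilin, Algebra.traceForm_apply, linearizedMap_apply]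

lemma trace_pow_three [Finite F] (x : F) :
    Algebra.trace (ZMod 3) F (x ^ 3) = Algebra.trace (ZMod 3) F x := by
  have h := Algebra.trace_eq_of_algEquiv
    (FiniteField.frobeniusAlgEquivOfAlgebraic (ZMod 3) F) x
  simpa using h

lemma trace_pow_nine [Finite F] (x : F) :
    Algebra.trace (ZMod 3) F (x ^ 9) = Algebra.trace (ZMod 3) F x := by
  rw [show x ^ 9 = (x ^ 3) ^ 3 by ring, trace_pow_three, trace_pow_three]

open Polynomial in
/-- The radical of a nonzero form in the family has at most `81` elements. -/
lemma card_radical_le [Fintype F] [DecidableEq F] (α β γ : F) (h0 : ¬(α = 0 ∧ β = 0 ∧ γ = 0)) :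
    #{x : F | ∀ y, traceBilin F α β γ x y + traceBilin F α β γ y x = 0} ≤ 81 := by
  have : CharP F 3 := charP_of_injective_algebraMap (algebraMap (ZMod 3) F).injective 3
  have h2 : (2 : F) ≠ 0 := by
    intro h
    have h3 : (3 : F) = 0 := CharP.cast_eq_zero F 3
    exact one_ne_zero (α := F) (by linear_combination h3 - h)
  let P : F[X] := C (γ ^ 9) * X ^ 81 + C (β ^ 9) * X ^ 27 + C (2 * α ^ 9) * X ^ 9 +
    C (β ^ 3) * X ^ 3 + C γ * X
  have hdeg : P.natDegree ≤ 81 := by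
    simp only [P]; compute_degree
  have hP : P ≠ 0 := by
    intro hP
    apply h0
    have c81 := congrArg (fun Q : F[X] => Q.coeff 81) hP
    have c27 := congrArg (fun Q : F[X] => Q.coeff 27) hP
    have c9 := congrArg (fun Q : F[X] => Q.coeff 9) hP
    simp only [P, coeff_add, coeff_C_mul, coeff_X_pow, coeff_X, coeff_zero] at c81 c27 c9
    norm_num [h2] at c81 c27 c9
    exact ⟨c9, c27, c81⟩
  refine le_trans ?_ hdeg
  refine le_trans (Finset.card_le_card ?_) ((Multiset.toFinset_card_le _).trans P.card_roots')
  intro x hx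
  rw [Finset.mem_filter] at hx
  rw [Multiset.mem_toFinset, mem_roots hP, IsRoot.def]
  apply (traceForm_nondegenerate (ZMod 3) F).1
  have hsurj : Function.Surjective (fun y : F => y ^ 9) := by
    apply Finite.surjective_of_injective
    intro a b hab
    have h3 := frobenius_inj F 3
    apply h3; apply h3
    simpa [frobenius_def, ← pow_mul] using hab
  intro z
  obtain ⟨y, rfl⟩ := hsurj z
  have hexp : P.eval x * y ^ 9 = (γ * x ^ 9 * y) ^ 9 + (β * x ^ 3 * y) ^ 9 + (α * x * y) ^ 9 +
      (α * x * y) ^ 9 + (β * x * y ^ 3) ^ 3 + γ * x * y ^ 9 := by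
    simp [P]; ring
  rw [Algebra.traceForm_apply, hexp, ← hx.2 y, traceBilin_apply, traceBilin_apply]
  simp only [map_add, trace_pow_nine, trace_pow_three]
  simp only [← map_add]
  congr 1; ring

lemma exists_nval [Fintype F] (m : ℕ) (hm : Even m) (hF : Module.finrank (ZMod 3) F = m) (α β γ : F)
    (h0 : ¬(α = 0 ∧ β = 0 ∧ γ = 0)) :
    ∃ ε : ℤ, (ε = 1 ∨ ε = -1) ∧ ∃ j < 5,
      ∑ x, traceChar 3 F (α * x ^ 2 + β * x ^ 4 + γ * x ^ 10) = nval 3 m ε j := by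
  classical
  have : Invertible (2 : ZMod 3) := ⟨2, rfl, rfl⟩
  obtain ⟨w, ⟨e⟩⟩ :=
    QuadraticForm.equivalent_weightedSumSquares (traceBilin F α β γ).toQuadraticMap
  have hw : ∀ x, traceBilin F α β γ x x = ∑ i, w i * e x i ^ 2 := by
    intro x
    have := e.map_app x
    rw [QuadraticMap.weightedSumSquares_apply] at this
    simpa [pow_two] using this.symm
  obtain ⟨s, hs, hsum⟩ := sum_stdAddChar_weighted w
  have hcard : #{i | w i = 0} + #{i | w i ≠ 0} = m := by
    rw [Finset.card_filter_add_card_filter_not]; simp [hF]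
  obtain ⟨ε, hε, hval⟩ := nval_eq_of_even hm hcard hs
  refine ⟨ε, hε, #{i | w i = 0}, ?_, ?_⟩
  rotate_left
  · rw [← hval, ← hsum, ← e.toLinearEquiv.toEquiv.sum_comp]
    refine Finset.sum_congr rfl fun x _ => ?_
    change ZMod.stdAddChar (Algebra.trace (ZMod 3) F _) =
      ZMod.stdAddChar (∑ i, w i * e x i ^ 2)
    rw [← hw, traceBilin_apply]
    congr 2; ring
  · have hpolar : ∀ x y, traceBilin F α β γ x y + traceBilin F α β γ y x =
        ∑ i, 2 * w i * e x i * e y i := by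
      intro x y
      have h := hw (x + y)
      simp only [map_add, LinearMap.add_apply, hw x, hw y] at h
      have : ∑ i, w i * (e x + e y) i ^ 2 = ∑ i, w i * e x i ^ 2 + ∑ i, w i * e y i ^ 2 +
          ∑ i, 2 * w i * e x i * e y i := by
        simp only [← Finset.sum_add_distrib, Pi.add_apply]
        exact Finset.sum_congr rfl fun i _ => by ring
      rw [this] at h
      linear_combination h
    have hle : 3 ^ #{i | w i = 0} ≤ 81 := by
      refine le_trans ?_ (card_radical_le F α β γ h0)
      let ι : ({i // w i = 0} → ZMod 3) → F := fun a =>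
        e.toLinearEquiv.symm fun i => if h : w i = 0 then a ⟨i, h⟩ else 0
      have hι : Function.Injective ι := by
        intro a b hab
        have := e.toLinearEquiv.symm.injective hab
        ext ⟨i, hi⟩
        simpa [hi] using congrFun this i
      have himg : #(Finset.univ.image ι) = 3 ^ #{i | w i = 0} := by
        rw [Finset.card_image_of_injective _ hι]
        simp [Fintype.card_subtype]
      rw [← himg]
      refine Finset.card_le_card fun x hx => ?_
      obtain ⟨a, -, rfl⟩ := Finset.mem_image.mp hx
      simp only [Finset.mem_filter, Finset.mem_univ, true_and]
      intro y
      rw [hpolar]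
      refine Finset.sum_eq_zero fun i _ => ?_
      have hx : e (ι a) = fun i => if h : w i = 0 then a ⟨i, h⟩ else 0 :=
        e.toLinearEquiv.apply_symm_apply _
      rw [hx]
      by_cases h : w i = 0 <;> simp [h]
    by_contra! h
    have := Nat.pow_le_pow_right (n := 3) (by norm_num) h
    omega

end TraceForms

section Values

lemma nval_pow_six (m j : ℕ) {ε : ℤ} (hε : ε = 1 ∨ ε = -1) :
    nval 3 m ε j ^ 6 = (3 ^ m) ^ 3 * ((-1) ^ j * 3 ^ (3 * j)) := by
  have hr : ((√((3 : ℝ) ^ (m + j)) : ℝ) : ℂ) ^ 6 = (3 ^ m) ^ 3 * 3 ^ (3 * j) := by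
    have h : √((3 : ℝ) ^ (m + j)) ^ 6 = (3 ^ m) ^ 3 * 3 ^ (3 * j) := by
      calc √((3 : ℝ) ^ (m + j)) ^ 6 = (√((3 : ℝ) ^ (m + j)) ^ 2) ^ 3 := by ring
        _ = _ := by rw [Real.sq_sqrt (by positivity)]; ring
    exact_mod_cast congrArg (fun r : ℝ => (r : ℂ)) h
  have hε6 : (ε : ℂ) ^ 6 = 1 := by rcases hε with rfl | rfl <;> norm_num
  have hI : Complex.I ^ 6 = -1 := by
    rw [show 6 = 2 * 3 from rfl, pow_mul, Complex.I_sq]; norm_num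
  unfold nval
  rw [Nat.cast_ofNat]
  split_ifs with hj
  · rw [mul_pow, hr, hε6, (Nat.even_iff.mpr hj).neg_one_pow]; ring
  · rw [mul_pow, mul_pow, hr, hε6, hI,
      (Nat.not_even_iff_odd.mp (by rwa [Nat.even_iff])).neg_one_pow]
    ring

lemma nval_inj_of_sign (m : ℕ) {ε ε' : ℤ} {j j' : ℕ} (hε : ε = 1 ∨ ε = -1) (hε' : ε' = 1 ∨ ε' = -1)
    (h : nval 3 m ε j = nval 3 m ε' j') : ε = ε' ∧ j = j' := by
  have hnorm : ∀ (ε : ℤ) (j : ℕ), (ε = 1 ∨ ε = -1) → ‖nval 3 m ε j‖ = √((3 : ℝ) ^ (m + j)) := by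
    intro ε j hε
    unfold nval
    rcases hε with rfl | rfl <;> split_ifs <;> simp [abs_of_nonneg (Real.sqrt_nonneg _)]
  have hj : j = j' := by
    have h1 := congrArg norm h
    rw [hnorm ε j hε, hnorm ε' j' hε', Real.sqrt_inj (by positivity) (by positivity)] at h1
    have := pow_right_injective₀ (by norm_num : (0 : ℝ) < 3) (by norm_num) h1
    omega
  subst hj
  refine ⟨?_, rfl⟩
  have h0 : ((√((3 : ℝ) ^ (m + j)) : ℝ) : ℂ) ≠ 0 := by
    rw [Complex.ofReal_ne_zero]; positivity
  unfold nval at h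
  rw [Nat.cast_ofNat] at h
  split_ifs at h
  · exact_mod_cast mul_right_cancel₀ h0 h
  · exact_mod_cast mul_right_cancel₀ Complex.I_ne_zero (mul_right_cancel₀ h0 h)

lemma expSum_eq_sum_traceChar (m : ℕ) [Fintype (GaloisField 3 m)] (α β γ : GaloisField 3 m) :
    expSum 3 m α β γ = ∑ x, traceChar 3 (GaloisField 3 m) (α * x ^ 2 + β * x ^ 4 + γ * x ^ 10) := by
  unfold expSum
  simp only [zetaPow_eq_stdAddChar]
  exact Finset.sum_congr (by ext; simp) fun _ _ => rfl

open Classical in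
/-- The sixth moment over nonzero parameters, grouped by the value of the exponential sum. -/
lemma sum_expSum_pow_six (m : ℕ) (hm : Even m) (hm0 : m ≠ 0) [Fintype (GaloisField 3 m)] :
    ∑ t : GaloisField 3 m × GaloisField 3 m × GaloisField 3 m with t ≠ (0, 0, 0),
        expSum 3 m t.1 t.2.1 t.2.2 ^ 6 =
      ∑ k ∈ ({1, -1} : Finset ℤ) ×ˢ Finset.range 5, nval 3 m k.1 k.2 ^ 6 * nn 3 m k.1 k.2 := by
  have hnn : ∀ ε j, (nn 3 m ε j : ℂ) =
      ∑ t : GaloisField 3 m × GaloisField 3 m × GaloisField 3 m with t ≠ (0, 0, 0),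
        if expSum 3 m t.1 t.2.1 t.2.2 = nval 3 m ε j then 1 else 0 := by
    intro ε j
    rw [Finset.sum_boole, Finset.filter_filter, nn, Set.ncard_eq_toFinset_card']
    congr 2
    ext t; simp
  simp_rw [hnn, Finset.mul_sum]
  rw [Finset.sum_comm]
  refine Finset.sum_congr rfl fun t ht => ?_
  obtain ⟨ε, hε, j, hj, h⟩ := exists_nval (GaloisField 3 m) m hm (GaloisField.finrank 3 hm0)
    t.1 t.2.1 t.2.2 (by simpa [Prod.ext_iff] using ht)
  rw [← expSum_eq_sum_traceChar] at h
  rw [Finset.sum_eq_single (ε, j)]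
  · simp [h]
  · rintro ⟨ε', j'⟩ hk hne
    simp only [Finset.mem_product, Finset.mem_insert, Finset.mem_singleton] at hk
    rw [if_neg, mul_zero]
    intro h'
    obtain ⟨rfl, rfl⟩ := nval_inj_of_sign m hε hk.1 (h.symm.trans h')
    exact hne rfl
  · intro hk
    exact absurd (by simpa using ⟨hε, hj⟩) hk

/-- Six-tuples as functions on `Fin 6`. -/
def sixTupleEquiv (F : Type*) : F × F × F × F × F × F ≃ (Fin 6 → F) where
  toFun t := ![t.1, t.2.1, t.2.2.1, t.2.2.2.1, t.2.2.2.2.1, t.2.2.2.2.2]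
  invFun x := (x 0, x 1, x 2, x 3, x 4, x 5)
  left_inv _ := rfl
  right_inv x := by ext i; fin_cases i <;> rfl

end Values

theorem count_six_tuples (m : ℕ) (hme : Even m) (hm6 : 6 ≤ m) :
    letI : Fact (Nat.Prime 3) := ⟨by norm_num⟩
    ({(x, y, z, w, u, v) : GaloisField 3 m × GaloisField 3 m × GaloisField 3 m ×
        GaloisField 3 m × GaloisField 3 m × GaloisField 3 m |
        x ^ 2 + y ^ 2 + z ^ 2 + w ^ 2 + u ^ 2 + v ^ 2 = 0 ∧
        x ^ 4 + y ^ 4 + z ^ 4 + w ^ 4 + u ^ 4 + v ^ 4 = 0 ∧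
        x ^ 10 + y ^ 10 + z ^ 10 + w ^ 10 + u ^ 10 + v ^ 10 = 0}.ncard : ℤ) =
      (nn 3 m 1 0 : ℤ) + nn 3 m (-1) 0 +
        (3 : ℤ) ^ 6 * ((nn 3 m 1 2 : ℤ) + nn 3 m (-1) 2) +
        (3 : ℤ) ^ 12 * ((nn 3 m 1 4 : ℤ) + nn 3 m (-1) 4) -
        (3 : ℤ) ^ 3 * ((nn 3 m 1 1 : ℤ) + nn 3 m (-1) 1) -
        (3 : ℤ) ^ 9 * ((nn 3 m 1 3 : ℤ) + nn 3 m (-1) 3) + (3 : ℤ) ^ (3 * m) := by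
  classical
  have hm0 : m ≠ 0 := by omega
  let F := GaloisField 3 m
  let _ : Fintype F := Fintype.ofFinite F
  have hq : (Fintype.card F : ℂ) = 3 ^ m := by
    rw [← Nat.card_eq_fintype_card, GaloisField.card 3 m hm0]; norm_num
  have hmom : ∑ t : F × F × F, expSum 3 m t.1 t.2.1 t.2.2 ^ 6 = (Fintype.card F : ℂ) ^ 3 *
      #{x : Fin 6 → F | ∑ i, x i ^ 2 = 0 ∧ ∑ i, x i ^ 4 = 0 ∧ ∑ i, x i ^ 10 = 0} := by
    simp_rw [expSum_eq_sum_traceChar]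
    exact sum_pow_six_eq_card (isPrimitive_traceChar 3 F) (· ^ 2) (· ^ 4) (· ^ 10)
  rw [← Finset.sum_filter_add_sum_filter_not _ (fun t => t ≠ ((0 : F), (0 : F), (0 : F))),
    sum_expSum_pow_six m hme hm0] at hmom
  have hzero : ∑ t : F × F × F with ¬ t ≠ (0, 0, 0), expSum 3 m t.1 t.2.1 t.2.2 ^ 6 =
      (3 ^ m) ^ 6 := by
    have : ({t : F × F × F | ¬ t ≠ (0, 0, 0)} : Finset _) = {(0, 0, 0)} := by ext; simp
    rw [this, Finset.sum_singleton, expSum_eq_sum_traceChar]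
    simp [← hq, F]
  have hset : {(x, y, z, w, u, v) : F × F × F × F × F × F |
        x ^ 2 + y ^ 2 + z ^ 2 + w ^ 2 + u ^ 2 + v ^ 2 = 0 ∧
        x ^ 4 + y ^ 4 + z ^ 4 + w ^ 4 + u ^ 4 + v ^ 4 = 0 ∧
        x ^ 10 + y ^ 10 + z ^ 10 + w ^ 10 + u ^ 10 + v ^ 10 = 0}.ncard =
      #{x : Fin 6 → F | ∑ i, x i ^ 2 = 0 ∧ ∑ i, x i ^ 4 = 0 ∧ ∑ i, x i ^ 10 = 0} := by
    rw [← Set.ncard_coe_finset, ← Set.ncard_image_of_injective _ (sixTupleEquiv F).injective,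
      Equiv.image_eq_preimage_symm]
    congr 1
    ext x
    simp only [Finset.coe_filter, Finset.mem_univ, true_and, Set.mem_ofPred_eq, Fin.sum_univ_six]
    rfl
  rw [hzero, hq, ← hset, Finset.sum_product, Finset.sum_pair (by norm_num)] at hmom
  simp only [Finset.sum_range_succ, Finset.sum_range_zero, nval_pow_six m _ (Or.inl rfl),
    nval_pow_six m _ (Or.inr rfl)] at hmom
  have h3 : ((3 : ℂ) ^ m) ^ 3 ≠ 0 := by simp
  rw [← Int.cast_inj (α := ℂ)]
  apply mul_left_cancel₀ h3
  push_cast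
  rw [mul_comm 3 m, pow_mul]
  linear_combination -hmom
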